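/- arXiv:1402.6817 — 2 statements merged into one kernel-verified Lean document; each statement's English description precedes it below -/
import Mathlib

section
/- Let n = h + d where h ≥ 4 is a Hadamard order and d ≥ 1. Then D(n)/n^{n/2} ≥ (2/(π·e))^{d/2}·(1 − d²·√(π/(2h))). -/
open Matrix

/-- A positive integer `m` is a Hadamard order if there is an `m × m` matrix
with entries in `{−1, 1}` satisfying `Aᵀ A = m I`. -/
def IsHadamardOrder (m : ℕ) : Prop :=
  ∃ A : Matrix (Fin m) (Fin m) ℝ,
    (∀ i j, A i j = 1 ∨ A i j = -1) ∧ Aᵀ * A = (m : ℝ) • 1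

/-- `D(n)`: the maximal determinant of an `n × n` matrix with entries in
`{−1, 1}`. -/
noncomputable def maxDet (n : ℕ) : ℝ :=
  sSup {x : ℝ | ∃ M : Matrix (Fin n) (Fin n) ℝ,
    (∀ i j, M i j = 1 ∨ M i j = -1) ∧ M.det = x}

/-!
Border a Hadamard matrix `A` of order `h` by `d` independent uniformly random sign columns `B`,
and let row `j` of `C` consist of the signs of the entries of `Aᵀ` applied to column `j` of `B`.
Pairs (row of `C`, column of `B`) with different indices are independent, so by Cauchy–Binet and
multilinearity the mean of `det (C A⁻¹ B)` is a sum, over maps from the `d` indices to the `h`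
columns of `A`, of determinants of correlations between the sign of one entry and the value of
another. Orthogonality of the columns makes these correlations `0` or `μ / h`, where
`μ = 𝔼 |ε₁ + ⋯ + ε_h|`, and only injective maps contribute: the mean is
`(μ / h) ^ d * (h (h - 1) ⋯ (h - d + 1))`. Since the determinant is affine in each row, a block `U`
of independent random signs satisfies `𝔼 det (C A⁻¹ B - U) = det (C A⁻¹ B)`, and some choice of `U`
as the remaining corner does not decrease the determinant of the Schur complement. The factor
`|det A| = h ^ (h / 2)` and the Wallis bound `μ / h ≥ √(2 / (π (h + 1)))` finish the proof, up to
elementary estimates in which `1 - d² √(π / (2h))` absorbs all the errors.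
-/

open Finset
open scoped BigOperators Nat Real

section IndependentRows

variable {m κ Ω : Type*} [Fintype m] [DecidableEq m]

theorem expect_det_independent_rows {K : Type*} [Field K] [CharZero K] [Fintype Ω]
    (f : m → Ω → m → K) :
    𝔼 w : m → Ω, (of fun i => f i (w i)).det = (of fun i => 𝔼 v, f i v).det := by
  have hmean : (of fun i => 𝔼 v, f i v) = (Fintype.card Ω : K)⁻¹ • of fun i => ∑ v, f i v := by
    ext i j
    simp [Fintype.expect_eq_sum_div_card, div_eq_inv_mul, Finset.expect_apply, Finset.sum_apply]
  have hsum : (of fun i => ∑ v, f i v).det = ∑ w : m → Ω, (of fun i => f i (w i)).det :=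
    (detRowAlternating (n := m) (R := K)).toMultilinearMap.map_sum f
  rw [hmean, det_smul, hsum, Fintype.expect_eq_sum_div_card, Fintype.card_fun, Nat.cast_pow,
    div_eq_inv_mul, inv_pow]

theorem det_mul_eq_sum_prod_mul_det {R : Type*} [CommRing R] [Fintype κ]
    (S : Matrix m κ R) (Y : Matrix κ m R) :
    (S * Y).det = ∑ g : m → κ, (∏ i, S i (g i)) * (Y.submatrix g id).det := by
  have hrows : S * Y = of fun i => ∑ k, S i k • Y k := by
    ext i j
    simp [mul_apply, Finset.sum_apply]
  rw [hrows]
  refine ((detRowAlternating (n := m) (R := R)).toMultilinearMap.map_sum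
    fun i k => S i k • Y k).trans (sum_congr rfl fun g _ => ?_)
  exact det_mul_column (fun i => S i (g i)) (Y.submatrix g id)

theorem card_injective_functions [Fintype κ] [DecidableEq κ] :
    #{g : m → κ | Function.Injective g} = (Fintype.card κ).descFactorial (Fintype.card m) := by
  rw [← Fintype.card_embedding_eq, ← Fintype.card_subtype]
  exact Fintype.card_congr (Equiv.subtypeInjectiveEquivEmbedding m κ)

theorem det_of_ite_apply_eq {R : Type*} [CommRing R] [DecidableEq κ] (g : m → κ) (t : R) :
    (of fun i j => if g i = g j then t else 0).det =
      if Function.Injective g then t ^ Fintype.card m else 0 := by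
  split_ifs with hg
  · simp only [hg.eq_iff]
    exact (congrArg det (smul_one_eq_diagonal t).symm).trans (by simp)
  · obtain ⟨i, j, hij, hne⟩ := Function.not_injective_iff.mp hg
    exact det_zero_of_row_eq hne (by ext; simp [hij])

theorem expect_det_of_orthogonal {K : Type*} [Field K] [CharZero K] [Fintype κ] [DecidableEq κ]
    [Fintype Ω] (S Y : Ω → κ → K) (t : K)
    (horth : ∀ k l, 𝔼 w, S w k * Y w l = if k = l then t else 0) :
    𝔼 w : m → Ω, (of fun i j => S (w i) ⬝ᵥ Y (w j)).det =
      t ^ Fintype.card m * (Fintype.card κ).descFactorial (Fintype.card m) := by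
  have hexpand (w : m → Ω) : (of fun i j => S (w i) ⬝ᵥ Y (w j)).det =
      ∑ g : m → κ, (of fun j i => S (w j) (g j) * Y (w j) (g i)).det := by
    refine (det_mul_eq_sum_prod_mul_det (of (S ∘ w)) (of (Y ∘ w))ᵀ).trans
      (sum_congr rfl fun g _ => ?_)
    rw [← det_transpose]
    exact (det_mul_column (fun j => S (w j) (g j)) (of fun j i => Y (w j) (g i))).symm
  calc 𝔼 w : m → Ω, (of fun i j => S (w i) ⬝ᵥ Y (w j)).det
      = 𝔼 w : m → Ω, ∑ g : m → κ, (of fun j i => S (w j) (g j) * Y (w j) (g i)).det := by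
        simp only [hexpand]
    _ = ∑ g : m → κ, (of fun j i => 𝔼 v, S v (g j) * Y v (g i)).det := by
        rw [expect_sum_comm]
        refine sum_congr rfl fun g _ => ?_
        rw [expect_det_independent_rows fun j v i => S v (g j) * Y v (g i)]
        congr 1
        ext j i
        simp [Finset.expect_apply]
    _ = ∑ g : m → κ, if Function.Injective g then t ^ Fintype.card m else 0 := by
        simp only [horth, det_of_ite_apply_eq]
    _ = _ := by
        rw [← sum_filter, sum_const, card_injective_functions, nsmul_eq_mul, mul_comm]

end IndependentRows

/-- The inclusion of the sign group `{1, -1}` into the multiplicative monoid of `ℝ`. Sign vectors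
and sign matrices are encoded with entries in `ℤˣ` and evaluated through this map. -/
noncomputable def signToReal : ℤˣ →* ℝ :=
  (Int.castRingHom ℝ : ℤ →* ℝ).comp (Units.coeHom ℤ)

theorem signToReal_eq_one_or (u : ℤˣ) : signToReal u = 1 ∨ signToReal u = -1 := by
  rcases Int.units_eq_one_or u with rfl | rfl <;> simp [signToReal]

theorem signToReal_neg (u : ℤˣ) : signToReal (-u) = -signToReal u := by
  simp [signToReal]

theorem signToReal_mul_self (u : ℤˣ) : signToReal u * signToReal u = 1 := by
  rw [← map_mul, Int.units_mul_self, map_one]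

theorem exists_map_signToReal_eq {m n : Type*} {M : Matrix m n ℝ}
    (hM : ∀ i j, M i j = 1 ∨ M i j = -1) : ∃ U : Matrix m n ℤˣ, U.map signToReal = M := by
  have hentry (i j) : ∃ u : ℤˣ, signToReal u = M i j := by
    rcases hM i j with h | h
    · exact ⟨1, by simp [h]⟩
    · exact ⟨-1, by simp [h, signToReal]⟩
  choose U hU using hentry
  exact ⟨U, Matrix.ext hU⟩

/-- The sign of a real number as a unit of `ℤ`. In contrast to `SignType.sign` it takes the
value `1` at `0`, so that every value is a legitimate entry of a sign matrix. -/
noncomputable def signUnit (y : ℝ) : ℤˣ := if 0 ≤ y then 1 else -1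

theorem signToReal_signUnit_mul_self (y : ℝ) : signToReal (signUnit y) * y = |y| := by
  unfold signUnit
  split_ifs with hy
  · simp [abs_of_nonneg hy]
  · simp [signToReal_neg, abs_of_neg (not_le.mp hy)]

/-- The mean `𝔼 |ε₁ + ⋯ + εₙ|` over independent uniform random signs indexed by `ι`. -/
noncomputable def meanAbsSignSum (ι : Type*) [Fintype ι] [DecidableEq ι] : ℝ :=
  𝔼 x : ι → ℤˣ, |∑ i, signToReal (x i)|

section RandomSigns

variable {ι : Type*} [Fintype ι] [DecidableEq ι]

theorem expect_signUnit_sum_mul_apply_eq (i j : ι) :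
    𝔼 x : ι → ℤˣ, signToReal (signUnit (∑ k, signToReal (x k))) * signToReal (x i) =
      𝔼 x : ι → ℤˣ, signToReal (signUnit (∑ k, signToReal (x k))) * signToReal (x j) := by
  refine Fintype.expect_equiv ((Equiv.swap i j).arrowCongr (Equiv.refl _)) _ _ fun x => ?_
  simp [Equiv.sum_comp (Equiv.swap i j) fun k => signToReal (x k)]

theorem card_mul_expect_signUnit_sum_mul (c : ι → ℝ) :
    Fintype.card ι * 𝔼 x : ι → ℤˣ, signToReal (signUnit (∑ i, signToReal (x i))) *
      ∑ i, c i * signToReal (x i) = (∑ i, c i) * meanAbsSignSum ι := by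
  have hlinear (c : ι → ℝ) (j : ι) :
      𝔼 x : ι → ℤˣ, signToReal (signUnit (∑ i, signToReal (x i))) *
        ∑ i, c i * signToReal (x i) =
      (∑ i, c i) * 𝔼 x : ι → ℤˣ, signToReal (signUnit (∑ i, signToReal (x i))) *
        signToReal (x j) := by
    simp only [mul_sum, expect_sum_comm, sum_mul]
    refine sum_congr rfl fun i _ => ?_
    rw [← expect_signUnit_sum_mul_apply_eq i j, mul_expect]
    exact expect_congr rfl fun x _ => mul_left_comm _ _ _
  rcases isEmpty_or_nonempty ι with _ | ⟨⟨j⟩⟩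
  · simp
  have hmean := hlinear 1 j
  simp only [Pi.one_apply, one_mul, signToReal_signUnit_mul_self, sum_const, card_univ,
    nsmul_eq_mul, mul_one] at hmean
  rw [hlinear c j, meanAbsSignSum, hmean]
  ring

theorem card_mul_expect_signUnit_dotProduct_mul (a b : ι → ℤˣ) :
    Fintype.card ι * 𝔼 x : ι → ℤˣ,
      signToReal (signUnit ((signToReal ∘ a) ⬝ᵥ (signToReal ∘ x))) *
        ((signToReal ∘ b) ⬝ᵥ (signToReal ∘ x)) =
      ((signToReal ∘ a) ⬝ᵥ (signToReal ∘ b)) * meanAbsSignSum ι := by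
  rw [dotProduct, ← card_mul_expect_signUnit_sum_mul]
  congr 1
  refine Fintype.expect_equiv (Equiv.mulLeft a) _ _ fun x => ?_
  simp only [dotProduct, Function.comp_apply, Equiv.coe_mulLeft, Pi.mul_apply, map_mul]
  congr 1
  refine sum_congr rfl fun i _ => ?_
  linear_combination (-signToReal (b i) * signToReal (x i)) * signToReal_mul_self (a i)

end RandomSigns

section BinomialMeanDeviation

theorem sum_range_choose_mul_sub {R : Type*} [CommRing R] (n m : ℕ) :
    ∑ j ∈ range m, (n.choose j : R) * (n - 2 * j) = m * n.choose m := by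
  induction m with
  | zero => simp
  | succ m ih =>
    have hsucc : (n.choose (m + 1) : R) * (m + 1) = n.choose m * (n - m) := by
      rcases le_or_gt m n with hmn | hmn
      · exact_mod_cast congrArg (Nat.cast (R := R)) (n.choose_succ_right_eq m)
      · simp [Nat.choose_eq_zero_of_lt hmn, Nat.choose_eq_zero_of_lt (Nat.lt_succ_of_lt hmn)]
    rw [sum_range_succ, ih]
    push_cast
    linear_combination -hsucc

theorem sum_range_choose_mul_abs_sub {n m : ℕ} (hnm : n ≤ 2 * m) (hmn : 2 * m ≤ n + 1) :
    ∑ j ∈ range (n + 1), (n.choose j : ℝ) * |(n : ℝ) - 2 * j| = 2 * m * n.choose m := by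
  have hlow : ∑ j ∈ range m, (n.choose j : ℝ) * |(n : ℝ) - 2 * j| =
      ∑ j ∈ range m, (n.choose j : ℝ) * (n - 2 * j) := by
    refine sum_congr rfl fun j hj => ?_
    have hjn : (2 * j : ℝ) ≤ n := by
      have := mem_range.mp hj
      exact_mod_cast (by lia : 2 * j ≤ n)
    rw [abs_of_nonneg (sub_nonneg.mpr hjn)]
  have hhigh : ∑ j ∈ Ico m (n + 1), (n.choose j : ℝ) * |(n : ℝ) - 2 * j| =
      -∑ j ∈ Ico m (n + 1), (n.choose j : ℝ) * (n - 2 * j) := by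
    rw [← sum_neg_distrib]
    refine sum_congr rfl fun j hj => ?_
    have hnj : (n : ℝ) ≤ 2 * j := by
      have := mem_Ico.mp hj
      exact_mod_cast (by lia : n ≤ 2 * j)
    rw [abs_of_nonpos (sub_nonpos.mpr hnj), mul_neg]
  have htotal := sum_range_choose_mul_sub (R := ℝ) n (n + 1)
  have hhalf := sum_range_choose_mul_sub (R := ℝ) n m
  rw [Nat.choose_succ_self, Nat.cast_zero, mul_zero] at htotal
  rw [← sum_range_add_sum_Ico _ (by lia : m ≤ n + 1)] at htotal ⊢
  rw [hlow, hhigh]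
  linear_combination 2 * hhalf - htotal

theorem sum_signs_apply_sum {ι M : Type*} [Fintype ι] [DecidableEq ι] [AddCommMonoid M]
    (f : ℝ → M) :
    ∑ x : ι → ℤˣ, f (∑ i, signToReal (x i)) =
      ∑ j ∈ range (Fintype.card ι + 1),
        (Fintype.card ι).choose j • f (Fintype.card ι - 2 * j) := by
  rw [← card_univ, ← sum_powerset_apply_card fun j => f (#univ - 2 * j)]
  refine sum_bij' (fun x _ => univ.filter fun i => x i = -1) (fun s _ i => if i ∈ s then -1 else 1)
    (by simp) (by simp) (fun x _ => ?_) (fun s _ => ?_) (fun x _ => ?_)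
  · ext i
    rcases Int.units_eq_one_or (x i) with h | h <;> simp [h]
  · ext i
    by_cases h : i ∈ s <;> simp [h]
  · have hentry (i : ι) : signToReal (x i) = 1 - 2 * if x i = -1 then 1 else 0 := by
      rcases Int.units_eq_one_or (x i) with h | h <;> norm_num [h, signToReal]
    simp only [hentry, sum_sub_distrib, ← mul_sum, sum_boole]
    simp

theorem choose_div_two_pow_eq_centralBinom_div {n m : ℕ} (hnm : n ≤ 2 * m)
    (hmn : 2 * m ≤ n + 1) : (n.choose m / 2 ^ n : ℝ) = m.centralBinom / 4 ^ m := by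
  obtain rfl | hn : n = 2 * m ∨ n + 1 = 2 * m := by lia
  · rw [Nat.centralBinom, pow_mul]
    norm_num
  · obtain ⟨k, rfl⟩ : ∃ k, m = k + 1 := ⟨m - 1, by lia⟩
    obtain rfl : n = 2 * k + 1 := by lia
    have hchoose : (k + 1).centralBinom = 2 * (2 * k + 1).choose (k + 1) := by
      rw [Nat.centralBinom, mul_add, mul_one, Nat.choose_succ_succ, ← Nat.choose_symm_half k]
      ring
    have hpow : (4 : ℝ) ^ (k + 1) = 2 * 2 ^ (2 * k + 1) := by
      rw [show (4 : ℝ) = 2 ^ 2 by norm_num, ← pow_mul]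
      ring
    rw [hchoose, hpow, Nat.cast_mul, Nat.cast_ofNat, mul_div_mul_left _ _ two_ne_zero]

theorem meanAbsSignSum_eq {ι : Type*} [Fintype ι] [DecidableEq ι] {m : ℕ}
    (hm : Fintype.card ι ≤ 2 * m) (hm' : 2 * m ≤ Fintype.card ι + 1) :
    meanAbsSignSum ι = 2 * m * (m.centralBinom / 4 ^ m) := by
  rw [meanAbsSignSum, Fintype.expect_eq_sum_div_card, sum_signs_apply_sum fun y => |y|]
  simp only [nsmul_eq_mul]
  rw [sum_range_choose_mul_abs_sub hm hm', ← choose_div_two_pow_eq_centralBinom_div hm hm']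
  simp [mul_div_assoc]

theorem two_div_pi_mul_le_centralBinom_div_sq (k : ℕ) :
    2 / (π * (2 * k + 1)) ≤ (k.centralBinom / 4 ^ k : ℝ) ^ 2 := by
  have hpos : (0 : ℝ) < k.centralBinom := by exact_mod_cast k.centralBinom_pos
  have hW := Real.Wallis.W_le k
  have hbinom : (k.centralBinom : ℝ) * (k ! * k !) = (2 * k)! := by
    have := Nat.choose_mul_factorial_mul_factorial (show k ≤ 2 * k by lia)
    rw [show 2 * k - k = k by lia, mul_assoc] at this
    exact_mod_cast this
  have hpow : (2 : ℝ) ^ (4 * k) = (4 ^ k) ^ 2 := by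
    rw [← pow_mul, mul_comm k 2, pow_mul, pow_mul]
    norm_num
  rw [Real.Wallis.W_eq_factorial_ratio, ← hbinom, hpow] at hW
  rw [div_le_div_iff₀ (by positivity) (by positivity)] at hW
  rw [div_pow, div_le_div_iff₀ (by positivity) (by positivity)]
  refine le_of_mul_le_mul_right ?_ (by positivity : (0 : ℝ) < k ! ^ 4)
  linarith

theorem card_mul_sqrt_le_meanAbsSignSum (ι : Type*) [Fintype ι] [DecidableEq ι] :
    Fintype.card ι * √(2 / (π * (Fintype.card ι + 1))) ≤ meanAbsSignSum ι := by
  set n := Fintype.card ι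
  obtain ⟨m, hnm, hmn⟩ : ∃ m, n ≤ 2 * m ∧ 2 * m ≤ n + 1 := ⟨(n + 1) / 2, by lia, by lia⟩
  have hmean : 2 * m * √(2 / (π * (2 * m + 1))) ≤ meanAbsSignSum ι := by
    rw [meanAbsSignSum_eq hnm hmn]
    gcongr
    exact Real.sqrt_le_iff.mpr ⟨by positivity, two_div_pi_mul_le_centralBinom_div_sq m⟩
  refine le_trans (le_of_sq_le_sq ?_ (by positivity)) hmean
  have hle : (n : ℝ) ≤ 2 * m := by exact_mod_cast hnm
  rw [mul_pow, mul_pow, Real.sq_sqrt (by positivity), Real.sq_sqrt (by positivity),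
    mul_div_assoc', mul_div_assoc', div_le_div_iff₀ (by positivity) (by positivity)]
  have hsq : (n : ℝ) ^ 2 ≤ (2 * m) ^ 2 := by gcongr
  have hmono : (n : ℝ) ^ 2 * (2 * m + 1) ≤ (2 * m) ^ 2 * (n + 1) := by
    nlinarith [mul_nonneg (mul_nonneg n.cast_nonneg m.cast_nonneg) (sub_nonneg.mpr hle)]
  nlinarith [mul_le_mul_of_nonneg_left hmono (by positivity : 0 ≤ 2 * π)]

end BinomialMeanDeviation

section MaxDet

variable {ι m : Type*} [Fintype ι] [DecidableEq ι] [Fintype m] [DecidableEq m]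

theorem bddAbove_signMatrix_det (n : ℕ) : BddAbove {x : ℝ | ∃ M : Matrix (Fin n) (Fin n) ℝ,
    (∀ i j, M i j = 1 ∨ M i j = -1) ∧ M.det = x} := by
  refine ⟨(Fintype.card (Fin n))! • (1 : ℝ) ^ Fintype.card (Fin n), ?_⟩
  rintro _ ⟨M, hM, rfl⟩
  refine (le_abs_self _).trans (det_le (abv := AbsoluteValue.abs) fun i j => ?_)
  rcases hM i j with h | h <;> simp [h]

theorem det_map_signToReal_le_maxDet (U : Matrix m m ℤˣ) :
    (U.map signToReal).det ≤ maxDet (Fintype.card m) := by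
  let e := Fintype.equivFin m
  exact le_csSup (bddAbove_signMatrix_det _)
    ⟨reindex e e (U.map signToReal), fun i j => signToReal_eq_one_or _, det_reindex_self e _⟩

theorem abs_det_map_signToReal_le_maxDet (U : Matrix m m ℤˣ) :
    |(U.map signToReal).det| ≤ maxDet (Fintype.card m) := by
  refine abs_le'.mpr ⟨det_map_signToReal_le_maxDet U, ?_⟩
  rcases isEmpty_or_nonempty m with _ | ⟨⟨i⟩⟩
  · have hone := det_map_signToReal_le_maxDet U
    rw [det_isEmpty] at hone ⊢
    linarith
  · have hneg : (U.updateRow i (-U i)).map signToReal =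
        (U.map signToReal).updateRow i ((-1 : ℝ) • (U.map signToReal) i) := by
      ext j k
      by_cases hj : j = i <;> simp [updateRow_apply, hj, signToReal_neg]
    have hdet := det_map_signToReal_le_maxDet (U.updateRow i (-U i))
    rwa [hneg, det_updateRow_smul, updateRow_eq_self, neg_one_mul] at hdet

theorem exists_det_le_det_sub_map_signToReal (F : Matrix m m ℝ) :
    ∃ U : Matrix m m ℤˣ, F.det ≤ (F - U.map signToReal).det := by
  have hrow (i : m) : 𝔼 v : m → ℤˣ, (F i - signToReal ∘ v) = F i := by
    ext j
    have hneg : 𝔼 v : m → ℤˣ, signToReal (v j) = -𝔼 v : m → ℤˣ, signToReal (v j) := by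
      rw [← expect_neg_distrib]
      exact Fintype.expect_equiv (Equiv.neg _) _ _ fun v => by simp [signToReal_neg]
    simp [Finset.expect_apply, expect_sub_distrib, self_eq_neg.mp hneg]
  have hmean := expect_det_independent_rows fun i (v : m → ℤˣ) => F i - signToReal ∘ v
  simp only [hrow] at hmean
  obtain ⟨U, -, hU⟩ := exists_le_of_le_expect univ_nonempty hmean.ge
  exact ⟨U, hU⟩

theorem abs_det_mul_det_mul_inv_mul_le_maxDet (A : Matrix ι ι ℤˣ) (B : Matrix ι m ℤˣ)
    (C : Matrix m ι ℤˣ) :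
    |(A.map signToReal).det| *
        (C.map signToReal * (A.map signToReal)⁻¹ * B.map signToReal).det ≤
      maxDet (Fintype.card ι + Fintype.card m) := by
  set F := C.map signToReal * (A.map signToReal)⁻¹ * B.map signToReal with hF
  obtain ⟨U, hU⟩ := exists_det_le_det_sub_map_signToReal F
  have hblock := abs_det_map_signToReal_le_maxDet (fromBlocks A B C U)
  rw [Fintype.card_sum] at hblock
  refine le_trans ?_ hblock
  by_cases hA : IsUnit (A.map signToReal).det
  · let _ := invertibleOfIsUnitDet _ hA
    rw [fromBlocks_map, det_fromBlocks₁₁, invOf_eq_nonsing_inv, ← hF, abs_mul,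
      ← neg_sub F, det_neg, abs_mul, abs_neg_one_pow, one_mul]
    gcongr
    exact hU.trans (le_abs_self _)
  · rw [isUnit_iff_ne_zero, not_not] at hA
    simp [hA]

end MaxDet

section Hadamard

variable {ι : Type*} [Fintype ι] [DecidableEq ι]

theorem abs_det_eq_of_transpose_mul_self {A : Matrix ι ι ℝ}
    (hA : Aᵀ * A = (Fintype.card ι : ℝ) • 1) :
    |A.det| = (Fintype.card ι : ℝ) ^ ((Fintype.card ι : ℝ) / 2) := by
  have hsq : A.det ^ 2 = (Fintype.card ι : ℝ) ^ Fintype.card ι := by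
    simpa [sq] using congrArg det hA
  rw [← Real.sqrt_sq_eq_abs, hsq, Real.sqrt_eq_rpow, ← Real.rpow_natCast, ← Real.rpow_mul
    (Nat.cast_nonneg _), mul_one_div]

theorem inv_eq_of_transpose_mul_self [Nonempty ι] {A : Matrix ι ι ℝ}
    (hA : Aᵀ * A = (Fintype.card ι : ℝ) • 1) : A⁻¹ = (Fintype.card ι : ℝ)⁻¹ • Aᵀ := by
  refine inv_eq_left_inv ?_
  rw [smul_mul, hA, inv_smul_smul₀ (by simp)]

theorem rpow_mul_le_maxDet_of_transpose_mul_self [Nonempty ι] (A : Matrix ι ι ℤˣ)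
    (hA : (A.map signToReal)ᵀ * A.map signToReal = (Fintype.card ι : ℝ) • 1) (d : ℕ) :
    (Fintype.card ι : ℝ) ^ ((Fintype.card ι : ℝ) / 2) *
        ((meanAbsSignSum ι / Fintype.card ι) ^ d * (Fintype.card ι).descFactorial d) ≤
      maxDet (Fintype.card ι + d) := by
  let S (x : ι → ℤˣ) (k : ι) : ℤˣ := signUnit ((signToReal ∘ Aᵀ k) ⬝ᵥ (signToReal ∘ x))
  have horth (k l : ι) : 𝔼 x : ι → ℤˣ, signToReal (S x k) *
      ((A.map signToReal)⁻¹ *ᵥ (signToReal ∘ x)) l =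
        if k = l then meanAbsSignSum ι / Fintype.card ι else 0 := by
    have hcorr := card_mul_expect_signUnit_dotProduct_mul (Aᵀ k) (Aᵀ l)
    have hcol : (signToReal ∘ Aᵀ k) ⬝ᵥ (signToReal ∘ Aᵀ l) =
        if k = l then (Fintype.card ι : ℝ) else 0 :=
      (congrFun₂ hA k l).trans (by simp [one_apply])
    have hentry (x : ι → ℤˣ) : ((A.map signToReal)⁻¹ *ᵥ (signToReal ∘ x)) l =
        (Fintype.card ι : ℝ)⁻¹ * ((signToReal ∘ Aᵀ l) ⬝ᵥ (signToReal ∘ x)) := by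
      rw [inv_eq_of_transpose_mul_self hA, smul_mulVec]
      rfl
    simp only [hentry, mul_left_comm, ← mul_expect]
    rw [hcol, ← eq_inv_mul_iff_mul_eq₀ (by simp)] at hcorr
    rw [hcorr]
    split_ifs <;> simp [div_eq_inv_mul]
  have hmean := expect_det_of_orthogonal (m := Fin d) (fun x => signToReal ∘ S x)
    (fun x => (A.map signToReal)⁻¹ *ᵥ (signToReal ∘ x)) _ horth
  rw [Fintype.card_fin] at hmean
  obtain ⟨x, -, hx⟩ := exists_le_of_le_expect univ_nonempty hmean.ge
  have hbound := abs_det_mul_det_mul_inv_mul_le_maxDet A (of x)ᵀ (of (S ∘ x))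
  rw [abs_det_eq_of_transpose_mul_self hA, Fintype.card_fin] at hbound
  refine le_trans ?_ hbound
  refine mul_le_mul_of_nonneg_left (hx.trans_eq ?_) (by positivity)
  rw [Matrix.mul_assoc]
  rfl

end Hadamard

section Asymptotics

theorem pow_mul_one_sub_le_descFactorial {h : ℕ} (hh : 0 < h) (d : ℕ) :
    (h : ℝ) ^ d * (1 - d * (d - 1) / h) ≤ h.descFactorial d := by
  have hpos : (0 : ℝ) < h := by exact_mod_cast hh
  rcases Nat.eq_zero_or_pos d with rfl | hd
  · simp
  have hd' : (1 : ℝ) ≤ d := by exact_mod_cast hd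
  rcases le_or_gt d h with hdh | hdh
  · have hfrac : ((d : ℝ) - 1) / h ≤ 1 := by
      rw [div_le_one hpos]
      linarith [(by exact_mod_cast hdh : (d : ℝ) ≤ h)]
    have hbernoulli := one_add_mul_le_pow (by linarith : (-2 : ℝ) ≤ -((d - 1) / h)) d
    have hcast : ((h + 1 - d : ℕ) : ℝ) = h * (1 + -((d - 1) / h)) := by
      rw [Nat.cast_sub (by lia)]
      field_simp
      push_cast
      ring
    calc (h : ℝ) ^ d * (1 - d * (d - 1) / h)
        = h ^ d * (1 + d * -((d - 1) / h)) := by ring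
      _ ≤ h ^ d * (1 + -((d - 1) / h)) ^ d := by gcongr
      _ = ((h + 1 - d : ℕ) : ℝ) ^ d := by rw [hcast, mul_pow]
      _ ≤ h.descFactorial d := by exact_mod_cast Nat.pow_sub_le_descFactorial h d
  · have hlt : (h : ℝ) ≤ d - 1 := by
      have : (h + 1 : ℝ) ≤ d := by exact_mod_cast hdh
      linarith
    have hle : 1 ≤ (d : ℝ) * (d - 1) / h := by
      rw [le_div_iff₀ hpos]
      nlinarith
    refine le_trans (mul_nonpos_of_nonneg_of_nonpos (by positivity) ?_) (Nat.cast_nonneg _)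
    linarith

theorem add_rpow_half_le {h d : ℝ} (hh : 0 < h) (hd : 0 ≤ d) :
    (h + d) ^ ((h + d) / 2) ≤ h ^ ((h + d) / 2) * Real.exp (d / 2 + d ^ 2 / (2 * h)) := by
  have hfactor : h + d = h * (1 + d / h) := by field_simp
  have hexp : 1 + d / h ≤ Real.exp (d / h) := by linarith [Real.add_one_le_exp (d / h)]
  calc (h + d) ^ ((h + d) / 2)
      = h ^ ((h + d) / 2) * (1 + d / h) ^ ((h + d) / 2) := by
        rw [← Real.mul_rpow hh.le (by positivity), ← hfactor]
    _ ≤ h ^ ((h + d) / 2) * Real.exp (d / h) ^ ((h + d) / 2) := by gcongr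
    _ = _ := by
        rw [← Real.exp_mul]
        congr 2
        field_simp

theorem rpow_mul_exp_neg_le_sqrt_pow {h : ℝ} (hh : 0 < h) (d : ℕ) :
    (2 / (π * h)) ^ ((d : ℝ) / 2) * Real.exp (-(d / h / 2)) ≤ √(2 / (π * (h + 1))) ^ d := by
  have hexp : h + 1 ≤ h * Real.exp h⁻¹ := by
    have := mul_le_mul_of_nonneg_left (Real.add_one_le_exp h⁻¹) hh.le
    rwa [mul_add, mul_inv_cancel₀ hh.ne', mul_one, add_comm] at this
  have hbase : 2 / (π * h) * Real.exp (-h⁻¹) ≤ 2 / (π * (h + 1)) := by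
    rw [Real.exp_neg, ← div_eq_mul_inv, div_div, mul_assoc]
    gcongr
  calc (2 / (π * h)) ^ ((d : ℝ) / 2) * Real.exp (-(d / h / 2))
      = (2 / (π * h) * Real.exp (-h⁻¹)) ^ ((d : ℝ) / 2) := by
        rw [Real.mul_rpow (by positivity) (Real.exp_pos _).le, ← Real.exp_mul]
        ring_nf
    _ ≤ (2 / (π * (h + 1))) ^ ((d : ℝ) / 2) := by gcongr
    _ = √(2 / (π * (h + 1))) ^ d := by
        rw [Real.sqrt_eq_rpow, ← Real.rpow_mul_natCast (by positivity), one_div_mul_eq_div]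

theorem three_mul_le_sq_mul_sqrt {h : ℝ} (hh : 0 < h) (d : ℕ)
    (hx : (d : ℝ) ^ 2 * √(π / (2 * h)) ≤ 1) :
    3 * (d ^ 2 / (2 * h)) ≤ d ^ 2 * √(π / (2 * h)) := by
  rcases Nat.eq_zero_or_pos d with rfl | hd
  · simp
  have hone : (1 : ℝ) ≤ d ^ 2 := one_le_pow₀ (by exact_mod_cast hd)
  calc 3 * ((d : ℝ) ^ 2 / (2 * h)) ≤ π * (d ^ 2 / (2 * h)) := by
        gcongr
        exact Real.pi_gt_three.le
    _ = d ^ 2 * (π / (2 * h)) := by ring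
    _ ≤ d ^ 2 * (d ^ 2 * (π / (2 * h))) := le_mul_of_one_le_left (by positivity) hone
    _ = (d ^ 2 * √(π / (2 * h))) ^ 2 := by
        rw [mul_pow, Real.sq_sqrt (by positivity)]
        ring
    _ ≤ d ^ 2 * √(π / (2 * h)) := pow_le_of_le_one (by positivity) hx two_ne_zero

theorem one_sub_mul_exp_le {q r x : ℝ} (hr : 0 ≤ r) (hrq : r ≤ 2 * q) (hqx : 3 * q ≤ x)
    (hx : x < 1) : (1 - x) * Real.exp (q + r / 2) ≤ 1 - 2 * q + r := by
  have hexp : (1 - (q + r / 2)) * Real.exp (q + r / 2) ≤ 1 := by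
    rw [← le_div_iff₀ (Real.exp_pos _), one_div, ← Real.exp_neg]
    exact Real.one_sub_le_exp_neg _
  have hprod : 1 - x ≤ (1 - 2 * q + r) * (1 - (q + r / 2)) := by nlinarith
  calc (1 - x) * Real.exp (q + r / 2)
      ≤ (1 - 2 * q + r) * (1 - (q + r / 2)) * Real.exp (q + r / 2) := by gcongr
    _ = (1 - 2 * q + r) * ((1 - (q + r / 2)) * Real.exp (q + r / 2)) := mul_assoc ..
    _ ≤ 1 - 2 * q + r := mul_le_of_le_one_right (by linarith) hexp

theorem one_sub_mul_exp_le_one_sub_div {h : ℝ} (hh : 0 < h) (d : ℕ)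
    (hx : (d : ℝ) ^ 2 * √(π / (2 * h)) < 1) :
    (1 - d ^ 2 * √(π / (2 * h))) * Real.exp (d ^ 2 / (2 * h) + d / h / 2) ≤
      1 - d * (d - 1) / h := by
  have hle : (d : ℝ) / h ≤ 2 * (d ^ 2 / (2 * h)) := by
    rw [← mul_div_assoc, mul_div_mul_left _ _ two_ne_zero]
    gcongr
    exact_mod_cast Nat.le_self_pow two_ne_zero d
  refine (one_sub_mul_exp_le (by positivity) hle (three_mul_le_sq_mul_sqrt hh d hx.le)
    hx).trans_eq ?_
  field_simp
  ring

theorem rpow_half_mul_exp_mul_rpow_add_half {h : ℝ} (hh : 0 < h) (d : ℕ) :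
    (2 / (π * Real.exp 1)) ^ ((d : ℝ) / 2) * Real.exp (d / 2) * h ^ ((h + d) / 2) =
      h ^ (h / 2) * (2 / (π * h)) ^ ((d : ℝ) / 2) * h ^ d := by
  have hexp : (2 / (π * Real.exp 1)) ^ ((d : ℝ) / 2) * Real.exp (d / 2) =
      (2 / (π * h)) ^ ((d : ℝ) / 2) * h ^ ((d : ℝ) / 2) := by
    rw [← Real.exp_one_rpow (d / 2), ← Real.mul_rpow (by positivity) (by positivity),
      ← Real.mul_rpow (by positivity) (by positivity)]
    congr 1
    field_simp
  have hpow : h ^ d = h ^ ((d : ℝ) / 2) * h ^ ((d : ℝ) / 2) := by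
    rw [← Real.rpow_add hh, add_halves, Real.rpow_natCast]
  rw [hexp, hpow, add_div, Real.rpow_add hh]
  ring

theorem rpow_mul_one_sub_mul_add_rpow_le {h : ℕ} (hh : 0 < h) (d : ℕ) :
    (2 / (π * Real.exp 1)) ^ ((d : ℝ) / 2) * (1 - (d : ℝ) ^ 2 * √(π / (2 * h))) *
        ((h : ℝ) + d) ^ (((h : ℝ) + d) / 2) ≤
      (h : ℝ) ^ ((h : ℝ) / 2) * (√(2 / (π * (h + 1))) ^ d * h.descFactorial d) := by
  have hpos : (0 : ℝ) < h := by exact_mod_cast hh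
  rcases le_or_gt 1 ((d : ℝ) ^ 2 * √(π / (2 * h))) with hx | hx
  · refine le_trans (mul_nonpos_of_nonpos_of_nonneg
      (mul_nonpos_of_nonneg_of_nonpos (by positivity) (sub_nonpos.mpr hx)) ?_) ?_ <;> positivity
  have hscalar := one_sub_mul_exp_le_one_sub_div hpos d hx
  have hfactor : 0 ≤ 1 - (d : ℝ) ^ 2 * √(π / (2 * h)) := sub_nonneg.mpr hx.le
  have hnonneg : 0 ≤ 1 - (d : ℝ) * (d - 1) / h :=
    (mul_nonneg hfactor (Real.exp_pos _).le).trans hscalar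
  set x := (d : ℝ) ^ 2 * √(π / (2 * h))
  calc (2 / (π * Real.exp 1)) ^ ((d : ℝ) / 2) * (1 - x) * ((h : ℝ) + d) ^ (((h : ℝ) + d) / 2)
      ≤ (2 / (π * Real.exp 1)) ^ ((d : ℝ) / 2) * (1 - x) *
          ((h : ℝ) ^ (((h : ℝ) + d) / 2) * Real.exp (d / 2 + d ^ 2 / (2 * h))) := by
        gcongr
        exact add_rpow_half_le hpos d.cast_nonneg
    _ = (h : ℝ) ^ ((h : ℝ) / 2) * ((2 / (π * h)) ^ ((d : ℝ) / 2) * Real.exp (-(d / h / 2)) *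
          (h ^ d * ((1 - x) * Real.exp (d ^ 2 / (2 * h) + d / h / 2)))) := by
        have hcancel : Real.exp (-(d / h / 2 : ℝ)) * Real.exp (d / h / 2 : ℝ) = 1 := by
          rw [← Real.exp_add, neg_add_cancel, Real.exp_zero]
        rw [Real.exp_add, Real.exp_add]
        linear_combination (1 - x) * Real.exp (d ^ 2 / (2 * h)) *
          (rpow_half_mul_exp_mul_rpow_add_half hpos d -
            h ^ ((h : ℝ) / 2) * (2 / (π * h)) ^ ((d : ℝ) / 2) * h ^ d * hcancel)
    _ ≤ (h : ℝ) ^ ((h : ℝ) / 2) * ((2 / (π * h)) ^ ((d : ℝ) / 2) * Real.exp (-(d / h / 2)) *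
          (h ^ d * (1 - d * (d - 1) / h))) := by gcongr
    _ ≤ (h : ℝ) ^ ((h : ℝ) / 2) * (√(2 / (π * (h + 1))) ^ d * h.descFactorial d) := by
        gcongr
        · exact rpow_mul_exp_neg_le_sqrt_pow hpos d
        · exact pow_mul_one_sub_le_descFactorial hh d

end Asymptotics

/-- Let `n = h + d` where `h ≥ 4` is a Hadamard order and `d ≥ 1`.  Then
`D(n)/n^{n/2} ≥ (2/(πe))^{d/2} (1 − d² √(π/(2h)))`. -/
theorem normalized_maxDet_lower_bound_Chebyshev (h d n : ℕ)
    (hh : 4 ≤ h) (hH : IsHadamardOrder h) (hd : 1 ≤ d) (hn : n = h + d) :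
    maxDet n / (n : ℝ) ^ ((n : ℝ) / 2) ≥
      (2 / (Real.pi * Real.exp 1)) ^ ((d : ℝ) / 2) *
        (1 - (d : ℝ) ^ 2 * Real.sqrt (Real.pi / (2 * h))) := by
  have hpos : 0 < h := by lia
  have _ : NeZero h := ⟨hpos.ne'⟩
  obtain ⟨A, hA, hAA⟩ := hH
  obtain ⟨U, rfl⟩ := exists_map_signToReal_eq hA
  have hmean : √(2 / (π * (h + 1))) ≤ meanAbsSignSum (Fin h) / h := by
    rw [le_div_iff₀' (by exact_mod_cast hpos)]
    simpa using card_mul_sqrt_le_meanAbsSignSum (Fin h)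
  have hdet := rpow_mul_le_maxDet_of_transpose_mul_self U (by simpa using hAA) d
  rw [Fintype.card_fin] at hdet
  subst hn
  rw [ge_iff_le, le_div_iff₀ (by positivity), Nat.cast_add]
  calc _ ≤ (h : ℝ) ^ ((h : ℝ) / 2) * (√(2 / (π * (h + 1))) ^ d * h.descFactorial d) :=
        rpow_mul_one_sub_mul_add_rpow_le hpos d
    _ ≤ (h : ℝ) ^ ((h : ℝ) / 2) * ((meanAbsSignSum (Fin h) / h) ^ d * h.descFactorial d) := by
        gcongr
    _ ≤ maxDet (h + d) := hdet
end

section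
/- Let d ≥ 1, let h ≥ 4 be a Hadamard order with Hadamard matrix A, and for B ∈ {−1,1}^{h×d} define C by c_{ij} = sgn((AᵀB)_{ji}), F = C A⁻¹ B, and G = F + I. Then there exists a choice of B ∈ {−1,1}^{h×d} such that det(G) ≥ μ(h)^d·(1 − 2d·√((d−1)·e)/μ(h)). -/
open Matrix

/-- The `±1` sign function: `sgn x = 1` if `x ≥ 0`, `−1` if `x < 0`. -/
noncomputable def sgn (x : ℝ) : ℝ := if 0 ≤ x then 1 else -1

/-- The `h × d` sign matrix corresponding to a Boolean matrix `b`. -/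
noncomputable def signMat {h d : ℕ} (b : Fin h → Fin d → Bool) :
    Matrix (Fin h) (Fin d) ℝ :=
  Matrix.of fun i j => if b i j then (1 : ℝ) else -1

/-- The matrix `C` with `c_{ij} = sgn((Aᵀ B)_{ji})`. -/
noncomputable def Cmat {h d : ℕ} (A : Matrix (Fin h) (Fin h) ℝ)
    (B : Matrix (Fin h) (Fin d) ℝ) : Matrix (Fin d) (Fin h) ℝ :=
  Matrix.of fun i j => sgn ((Aᵀ * B) j i)

/-- The matrix `F = C A⁻¹ B`. -/
noncomputable def Fmat {h d : ℕ} (A : Matrix (Fin h) (Fin h) ℝ)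
    (B : Matrix (Fin h) (Fin d) ℝ) : Matrix (Fin d) (Fin d) ℝ :=
  Cmat A B * A⁻¹ * B

/-- Expectation of `f(B)`, averaged over the `2^(h·d)` equally likely
`h × d` matrices `B` with entries in `{−1, 1}`. -/
noncomputable def expec (h d : ℕ) (f : Matrix (Fin h) (Fin d) ℝ → ℝ) : ℝ :=
  (∑ b : Fin h → Fin d → Bool, f (signMat b)) / 2 ^ (h * d)


/-- `μ(h) = 1 + 2^{−h} h binom(h, h/2)`. -/
noncomputable def mu (h : ℕ) : ℝ :=
  1 + (2 : ℝ) ^ (-(h : ℤ)) * h * (h.choose (h / 2) : ℝ)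


/-!
For a uniformly random `B` the entries of `F = C * A⁻¹ * B` are `u (b i) ⬝ᵥ b j`, where the `b i`
are the columns of `B` and `u x = sgn (Aᵀ x)ᵀ * A⁻¹` is a unit vector. The diagonal entries have
mean `μ - 1`, and since `u` is a subgradient of the convex function `x ↦ u x ⬝ᵥ x`, the
Efron–Stein inequality bounds their variance by `2`; the off-diagonal entries have second moment
`1`. Hence some `B` has `‖G - μ • 1‖² ≤ d ^ 2 + d` in the Frobenius norm. Expanding `det G`
multilinearly in its rows around `μ • 1` and applying Hadamard's inequality to each term gives
`det G ≥ μ ^ d * (1 - R * exp R)` with `R = d * √(d + 1) / μ`, which suffices for `d ≥ 2` unless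
the claimed bound is negative. In the remaining cases, let all columns of `B` equal one vector `x`
with `u x ⬝ᵥ x ≥ μ - 1`; then `det G ≥ 1 + d * (μ - 1)`.
-/

open scoped BigOperators

theorem sq_expect_le_expect_sq {α : Type*} [Fintype α] [Nonempty α] (g : α → ℝ) :
    (𝔼 a, g a) ^ 2 ≤ 𝔼 a, g a ^ 2 := by
  simpa only [Pi.one_apply, mul_one, one_pow, Fintype.expect_const] using
    Finset.expect_mul_sq_le_sq_mul_sq Finset.univ g 1

section EfronStein

variable {ι α : Type*} [DecidableEq ι] [Fintype α]

/-- The conditional expectation of `f` given all coordinates but the `i`-th. -/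
noncomputable def coordMean (i : ι) (f : (ι → α) → ℝ) (x : ι → α) : ℝ :=
  𝔼 a, f (Function.update x i a)

theorem coordMean_update (i : ι) (f : (ι → α) → ℝ) (x : ι → α) (a : α) :
    coordMean i f (Function.update x i a) = coordMean i f x := by
  simp only [coordMean, Function.update_idem]

theorem dependsOn_coordMean {i : ι} {s : Finset ι} {f : (ι → α) → ℝ}
    (hf : DependsOn f (insert i s : Finset ι)) : DependsOn (coordMean i f) s := fun x y hxy =>
  Finset.expect_congr rfl fun a _ => hf fun j hj => by
    rcases eq_or_ne j i with rfl | hji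
    · simp only [Function.update_self]
    · simpa only [Function.update_of_ne hji] using hxy j (Finset.mem_of_mem_insert_of_ne hj hji)

variable [Fintype ι]

theorem expect_update_comm (F : (ι → α) → α → ℝ) (i : ι) :
    𝔼 x, 𝔼 a, F (Function.update x i a) (x i) = 𝔼 x, 𝔼 a, F x a := by
  have swap_involutive : Function.Involutive
      fun p : (ι → α) × α => (Function.update p.1 i p.2, p.1 i) := fun p => by simp
  have := Fintype.expect_equiv swap_involutive.toPerm
    (fun p => F (Function.update p.1 i p.2) (p.1 i)) (fun p => F p.1 p.2) fun _ => rfl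
  rwa [← Finset.univ_product_univ, Finset.expect_product, Finset.expect_product] at this

variable [Nonempty α]

theorem expect_update (f : (ι → α) → ℝ) (i : ι) :
    𝔼 x, 𝔼 a, f (Function.update x i a) = 𝔼 x, f x := by
  simpa only [Fintype.expect_const] using expect_update_comm (fun x _ => f x) i

theorem expect_eval (f : α → ℝ) (i : ι) : 𝔼 x : ι → α, f (x i) = 𝔼 a, f a := by
  simpa only [Function.update_self, Fintype.expect_const] using
    (expect_update (fun x : ι → α => f (x i)) i).symm

theorem expect_eval_pair (f : α → α → ℝ) {i j : ι} (hij : i ≠ j) :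
    𝔼 x : ι → α, f (x i) (x j) = 𝔼 a, 𝔼 b, f a b := by
  rw [← expect_eval (fun a => 𝔼 b, f a b) i, ← expect_update _ j]
  simp only [Function.update_self, Function.update_of_ne hij]

/-- The mean squared change of `f` when the `i`-th coordinate is resampled. This is twice the
expected conditional variance of `f` in that coordinate. -/
noncomputable def resampleEnergy (i : ι) (f : (ι → α) → ℝ) : ℝ :=
  𝔼 x, 𝔼 a, (f x - f (Function.update x i a)) ^ 2

theorem expect_coordMean (i : ι) (f : (ι → α) → ℝ) : 𝔼 x, coordMean i f x = 𝔼 x, f x :=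
  expect_update f i

theorem expect_mul_coordMean (i : ι) (f : (ι → α) → ℝ) :
    𝔼 x, f x * coordMean i f x = 𝔼 x, coordMean i f x ^ 2 := by
  rw [← expect_update _ i]
  simp only [coordMean_update, ← Finset.expect_mul, sq]
  rfl

theorem expect_sq_eq_coordMean_add_resampleEnergy (i : ι) (f : (ι → α) → ℝ) :
    𝔼 x, f x ^ 2 = 𝔼 x, coordMean i f x ^ 2 + resampleEnergy i f / 2 := by
  have cross : 𝔼 x, 𝔼 a, 2 * f x * f (Function.update x i a) =
      2 * 𝔼 x, coordMean i f x ^ 2 := by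
    simp only [← expect_mul_coordMean, mul_assoc, ← Finset.mul_expect]
    rfl
  simp only [resampleEnergy, sub_sq, Finset.expect_add_distrib, Finset.expect_sub_distrib, cross,
    Fintype.expect_const, expect_update (fun x => f x ^ 2) i]
  ring

theorem resampleEnergy_coordMean_le {i j : ι} (hij : i ≠ j) (f : (ι → α) → ℝ) :
    resampleEnergy j (coordMean i f) ≤ resampleEnergy j f := by
  calc resampleEnergy j (coordMean i f)
      = 𝔼 x, 𝔼 a, (𝔼 c, (f (Function.update x i c) -
          f (Function.update (Function.update x i c) j a))) ^ 2 := by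
        simp only [resampleEnergy, coordMean, Finset.expect_sub_distrib,
          Function.update_comm hij]
    _ ≤ 𝔼 x, 𝔼 a, 𝔼 c, (f (Function.update x i c) -
          f (Function.update (Function.update x i c) j a)) ^ 2 :=
        Finset.expect_le_expect fun x _ => Finset.expect_le_expect fun a _ =>
          sq_expect_le_expect_sq _
    _ = 𝔼 x, 𝔼 c, 𝔼 a, (f (Function.update x i c) -
          f (Function.update (Function.update x i c) j a)) ^ 2 :=
        Finset.expect_congr rfl fun x _ => Finset.expect_comm _ _ _
    _ = resampleEnergy j f :=
        expect_update (fun x => 𝔼 a, (f x - f (Function.update x j a)) ^ 2) i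

theorem expect_sq_sub_sq_expect_le_of_dependsOn (s : Finset ι) (f : (ι → α) → ℝ)
    (hf : DependsOn f s) :
    𝔼 x, f x ^ 2 - (𝔼 x, f x) ^ 2 ≤ (∑ i ∈ s, resampleEnergy i f) / 2 := by
  induction s using Finset.induction generalizing f with
  | empty =>
    obtain ⟨c, rfl⟩ : ∃ c, f = fun _ => c :=
      ⟨f fun _ => Classical.arbitrary α, funext fun x => hf (by simp)⟩
    simp
  | insert i s hi ih =>
    have energy_le : ∑ j ∈ s, resampleEnergy j (coordMean i f) ≤ ∑ j ∈ s, resampleEnergy j f :=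
      Finset.sum_le_sum fun j hj => resampleEnergy_coordMean_le (by rintro rfl; exact hi hj) f
    have := ih (coordMean i f) (dependsOn_coordMean hf)
    rw [expect_coordMean] at this
    rw [Finset.sum_insert hi, expect_sq_eq_coordMean_add_resampleEnergy i f]
    linarith

theorem efron_stein (f : (ι → α) → ℝ) :
    𝔼 x, (f x - 𝔼 y, f y) ^ 2 ≤ (∑ i, resampleEnergy i f) / 2 := by
  have variance_eq : 𝔼 x, (f x - 𝔼 y, f y) ^ 2 = 𝔼 x, f x ^ 2 - (𝔼 x, f x) ^ 2 := by
    simp only [sub_sq, Finset.expect_add_distrib, Finset.expect_sub_distrib,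
      Fintype.expect_const, ← Finset.expect_mul, ← Finset.mul_expect]
    ring
  rw [variance_eq]
  exact expect_sq_sub_sq_expect_le_of_dependsOn Finset.univ f
    (by simpa only [Finset.coe_univ] using dependsOn_univ f)

end EfronStein

section Determinant

variable {ι : Type*} [Fintype ι]

theorem sum_sqrt_sum_sq_le (N : Matrix ι ι ℝ) :
    ∑ i, √(∑ j, N i j ^ 2) ≤ √(Fintype.card ι * ∑ i, ∑ j, N i j ^ 2) := by
  rw [Real.sqrt_mul (Nat.cast_nonneg _)]
  simpa using Real.sum_sqrt_mul_sqrt_le Finset.univ (fun _ => zero_le_one)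
    fun i => Finset.sum_nonneg fun j _ => sq_nonneg (N i j)

theorem norm_multilinear_add_sub_le {𝕜 G : Type*} {E : ι → Type*} [NontriviallyNormedField 𝕜]
    [∀ i, SeminormedAddCommGroup (E i)] [∀ i, NormedSpace 𝕜 (E i)] [SeminormedAddCommGroup G]
    [NormedSpace 𝕜 G] (f : MultilinearMap 𝕜 E G) (hf : ∀ v, ‖f v‖ ≤ ∏ i, ‖v i‖) {m : ℝ}
    (hm : 0 < m) (v w : ∀ i, E i) (hv : ∀ i, ‖v i‖ ≤ m) :
    ‖f (v + w) - f v‖ ≤ m ^ Fintype.card ι *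
      ((∑ i, ‖w i‖) / m * Real.exp ((∑ i, ‖w i‖) / m)) := by
  classical
  have factor_le : ∀ i, max ‖(v + w) i‖ ‖v i‖ ≤ m * Real.exp (‖w i‖ / m) := fun i =>
    calc max ‖(v + w) i‖ ‖v i‖ ≤ m + ‖w i‖ :=
          max_le ((norm_add_le _ _).trans (by gcongr; exact hv i))
            ((hv i).trans (le_add_of_nonneg_right (norm_nonneg _)))
      _ = m * (‖w i‖ / m + 1) := by field_simp; ring
      _ ≤ m * Real.exp (‖w i‖ / m) := by gcongr; exact Real.add_one_le_exp _
  have term_le : ∀ i, (∏ j, if j = i then ‖(v + w) i - v i‖ else max ‖(v + w) j‖ ‖v j‖) ≤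
      m ^ Fintype.card ι * (‖w i‖ / m * Real.exp ((∑ i, ‖w i‖) / m)) := fun i =>
    calc (∏ j, if j = i then ‖(v + w) i - v i‖ else max ‖(v + w) j‖ ‖v j‖)
        ≤ ∏ j, m * ((if j = i then ‖w i‖ / m else 1) * Real.exp (‖w j‖ / m)) := by
          refine Finset.prod_le_prod (fun j _ => by split_ifs <;> positivity) fun j _ => ?_
          split_ifs with hji
          · rw [Pi.add_apply, add_sub_cancel_left, ← mul_assoc, mul_div_cancel₀ _ hm.ne']
            exact le_mul_of_one_le_right (norm_nonneg _) (Real.one_le_exp (by positivity))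
          · simpa only [one_mul] using factor_le j
      _ = m ^ Fintype.card ι * (‖w i‖ / m * Real.exp ((∑ i, ‖w i‖) / m)) := by
          rw [Finset.prod_mul_distrib, Finset.prod_mul_distrib, ← Real.exp_sum,
            ← Finset.sum_div, Finset.prod_ite_eq' Finset.univ i, Finset.prod_const,
            Finset.card_univ, if_pos (Finset.mem_univ i)]
  calc ‖f (v + w) - f v‖
      ≤ ∑ i, ∏ j, if j = i then ‖(v + w) i - v i‖ else max ‖(v + w) j‖ ‖v j‖ := by
        simpa only [one_mul] using
          f.norm_image_sub_le_of_bound' zero_le_one (by simpa only [one_mul] using hf) (v + w) v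
    _ ≤ ∑ i, m ^ Fintype.card ι * (‖w i‖ / m * Real.exp ((∑ i, ‖w i‖) / m)) :=
        Finset.sum_le_sum fun i _ => term_le i
    _ = _ := by rw [← Finset.mul_sum, ← Finset.sum_mul, ← Finset.sum_div]

variable [DecidableEq ι]

theorem abs_orthonormalBasis_det_le {E : Type*} [NormedAddCommGroup E] [InnerProductSpace ℝ E]
    (b : OrthonormalBasis ι ℝ E) (v : ι → E) : |b.toBasis.det v| ≤ ∏ i, ‖v i‖ := by
  let e := Fintype.equivFin ι
  let b' := b.reindex e
  have : FiniteDimensional ℝ E := b.toBasis.finiteDimensional_of_finite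
  have : Fact (Module.finrank ℝ E = Fintype.card ι) := ⟨Module.finrank_eq_card_basis b.toBasis⟩
  have hadamard := b'.toBasis.orientation.abs_volumeForm_apply_le (v ∘ e.symm)
  rw [Orientation.volumeForm_robust' _ b', OrthonormalBasis.reindex_toBasis,
    Module.Basis.det_reindex, Function.comp_assoc, e.symm_comp_self, Function.comp_id] at hadamard
  exact hadamard.trans_eq (e.symm.prod_comp fun i => ‖v i‖)

theorem abs_det_smul_one_add_sub_le {m : ℝ} (hm : 0 < m) (N : Matrix ι ι ℝ) :
    |(m • (1 : Matrix ι ι ℝ) + N).det - m ^ Fintype.card ι| ≤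
      m ^ Fintype.card ι * ((∑ i, √(∑ j, N i j ^ 2)) / m *
        Real.exp ((∑ i, √(∑ j, N i j ^ 2)) / m)) := by
  let b := EuclideanSpace.basisFun ι ℝ
  let rows (M : Matrix ι ι ℝ) : ι → EuclideanSpace ℝ ι := fun i => WithLp.toLp 2 (M i)
  have det_rows (M : Matrix ι ι ℝ) : b.toBasis.det (rows M) = M.det := by
    rw [Module.Basis.det_apply, ← det_transpose]
    congr 1
  have norm_rows (M : Matrix ι ι ℝ) (i : ι) : ‖rows M i‖ = √(∑ j, M i j ^ 2) := by
    simp [rows, EuclideanSpace.norm_eq]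
  have perturbation := norm_multilinear_add_sub_le b.toBasis.det.toMultilinearMap
    (abs_orthonormalBasis_det_le b) hm (rows (m • 1)) (rows N) fun i => by
      simp [norm_rows, Matrix.one_apply, Real.sqrt_sq hm.le]
  have add_rows : rows (m • 1) + rows N = rows (m • 1 + N) := rfl
  simpa only [AlternatingMap.coe_multilinearMap, add_rows, det_rows, norm_rows, det_smul, det_one,
    mul_one, Real.norm_eq_abs] using perturbation

theorem pow_mul_one_sub_mul_exp_le_det_smul_one_add {m R : ℝ} (hm : 0 < m) (hR : 0 ≤ R)
    (N : Matrix ι ι ℝ) (hN : Fintype.card ι * ∑ i, ∑ j, N i j ^ 2 ≤ (m * R) ^ 2) :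
    m ^ Fintype.card ι * (1 - R * Real.exp R) ≤ (m • (1 : Matrix ι ι ℝ) + N).det := by
  have radius_le : (∑ i, √(∑ j, N i j ^ 2)) / m ≤ R := by
    rw [div_le_iff₀' hm]
    exact (sum_sqrt_sum_sq_le N).trans (Real.sqrt_le_iff.mpr ⟨by positivity, hN⟩)
  have error_le : (∑ i, √(∑ j, N i j ^ 2)) / m * Real.exp ((∑ i, √(∑ j, N i j ^ 2)) / m) ≤
      R * Real.exp R := by
    gcongr
  have perturbation := (abs_le.mp (abs_det_smul_one_add_sub_le hm N)).1
  rw [mul_one_sub]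
  linarith [mul_le_mul_of_nonneg_left error_le (pow_pos hm (Fintype.card ι)).le]

end Determinant

section SignVectors

variable {ι : Type*}

/-- The real vector with entries `±1` given by a family of signs. Signs are taken in `ℤˣ`, so that
the averages over `ι → ℤˣ` below are expectations over independent uniform signs. -/
def signVec (ε : ι → ℤˣ) (i : ι) : ℝ := ((ε i : ℤ) : ℝ)

theorem signVec_eq_one_or (ε : ι → ℤˣ) (i : ι) : signVec ε i = 1 ∨ signVec ε i = -1 := by
  rcases Int.units_eq_one_or (ε i) with h | h <;> simp [signVec, h]

theorem exists_eq_signVec {w : ι → ℝ} (hw : ∀ i, w i = 1 ∨ w i = -1) :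
    ∃ ε : ι → ℤˣ, w = signVec ε := by
  have (i : ι) : ∃ e : ℤˣ, w i = ((e : ℤ) : ℝ) :=
    (hw i).elim (fun h => ⟨1, by simp [h]⟩) fun h => ⟨-1, by simp [h]⟩
  choose ε hε using this
  exact ⟨ε, funext hε⟩

theorem signVec_mul (δ ε : ι → ℤˣ) : signVec (δ * ε) = signVec δ * signVec ε := by
  ext i
  simp [signVec]

theorem expect_intUnits (f : ℤˣ → ℝ) : 𝔼 e, f e = (f 1 + f (-1)) / 2 := by
  rw [Fintype.expect_eq_sum_div_card, UnitsInt.univ, Finset.sum_pair (by decide)]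
  simp

variable [DecidableEq ι]

theorem signVec_sub_signVec_update (ε : ι → ℤˣ) (i : ι) (e : ℤˣ) :
    signVec ε - signVec (Function.update ε i e) =
      Pi.single i (((ε i : ℤ) : ℝ) - ((e : ℤ) : ℝ)) := by
  ext j
  rcases eq_or_ne j i with rfl | hji
  · simp [signVec]
  · simp [signVec, hji]

variable [Fintype ι]

theorem expect_signVec_mul_signVec (i j : ι) :
    𝔼 ε : ι → ℤˣ, signVec ε i * signVec ε j = (1 : Matrix ι ι ℝ) i j := by
  unfold signVec
  rcases eq_or_ne i j with rfl | hij
  · rw [expect_eval (fun e : ℤˣ => ((e : ℤ) : ℝ) * ((e : ℤ) : ℝ)) i, expect_intUnits]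
    norm_num
  · rw [expect_eval_pair (fun e e' : ℤˣ => ((e : ℤ) : ℝ) * ((e' : ℤ) : ℝ)) hij, expect_intUnits,
      expect_intUnits, expect_intUnits, Matrix.one_apply_ne hij]
    norm_num

theorem expect_sq_dotProduct_signVec (u : ι → ℝ) :
    𝔼 ε : ι → ℤˣ, (u ⬝ᵥ signVec ε) ^ 2 = u ⬝ᵥ u := by
  calc 𝔼 ε : ι → ℤˣ, (u ⬝ᵥ signVec ε) ^ 2
      = 𝔼 ε : ι → ℤˣ, ∑ i, ∑ j, u i * u j * (signVec ε i * signVec ε j) := by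
        simp only [sq, dotProduct, Finset.sum_mul_sum, mul_mul_mul_comm]
    _ = ∑ i, ∑ j, u i * u j * (1 : Matrix ι ι ℝ) i j := by
        simp only [Finset.expect_sum_comm, ← Finset.mul_expect, expect_signVec_mul_signVec]
    _ = u ⬝ᵥ u := by simp [Matrix.one_apply, dotProduct]

theorem sum_apply_sum_signVec {M : Type*} [AddCommMonoid M] (g : ℝ → M) :
    ∑ ε : ι → ℤˣ, g (∑ i, signVec ε i) =
      ∑ k ∈ Finset.range (Fintype.card ι + 1),
        (Fintype.card ι).choose k • g (Fintype.card ι - 2 * k) := by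
  let negatives : (ι → ℤˣ) ≃ Finset ι :=
    { toFun ε := {i | ε i = -1}
      invFun s i := if i ∈ s then -1 else 1
      left_inv ε := funext fun i => by
        rcases Int.units_eq_one_or (ε i) with h | h <;> simp [h]
      right_inv s := by ext i; by_cases h : i ∈ s <;> simp [h] }
  have sum_eq (ε : ι → ℤˣ) :
      ∑ i, signVec ε i = (Fintype.card ι : ℝ) - 2 * ((negatives ε).card : ℝ) := by
    have entry_eq (i : ι) : signVec ε i = 1 - 2 * if ε i = -1 then 1 else 0 := by
      rcases Int.units_eq_one_or (ε i) with h | h <;> norm_num [signVec, h]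
    simp [entry_eq, negatives, Finset.sum_sub_distrib, ← Finset.mul_sum, -mul_ite]
  simp only [sum_eq]
  rw [negatives.sum_comp fun s => g (Fintype.card ι - 2 * (s.card : ℝ)), ← Finset.powerset_univ,
    Finset.sum_powerset_apply_card fun k => g (Fintype.card ι - 2 * (k : ℝ)), Finset.card_univ]

theorem sum_range_choose_mul_sub_two_mul (n k : ℕ) :
    ∑ j ∈ Finset.range k, (n.choose j : ℝ) * (n - 2 * j) = k * n.choose k := by
  induction k with
  | zero => simp
  | succ k ih =>
    have absorb : (n.choose (k + 1) : ℝ) * (k + 1) = n.choose k * (n - k) := by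
      rcases le_or_gt k n with hk | hk
      · have := congrArg (Nat.cast (R := ℝ)) (Nat.choose_succ_right_eq n k)
        push_cast [Nat.cast_sub hk] at this
        exact this
      · simp [Nat.choose_eq_zero_of_lt hk, Nat.choose_eq_zero_of_lt (hk.trans k.lt_succ_self)]
    rw [Finset.sum_range_succ, ih, Nat.cast_succ]
    linarith

theorem sum_range_choose_mul_abs_sub_two_mul (m : ℕ) :
    ∑ k ∈ Finset.range (2 * m + 1), ((2 * m).choose k : ℝ) * |((2 * m : ℕ) : ℝ) - 2 * k| =
      ((2 * m : ℕ) : ℝ) * (2 * m).choose m := by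
  let term (k : ℕ) : ℝ := (2 * m).choose k * (((2 * m : ℕ) : ℝ) - 2 * k)
  have lower : ∑ k ∈ Finset.range m, ((2 * m).choose k : ℝ) * |((2 * m : ℕ) : ℝ) - 2 * k| =
      ∑ k ∈ Finset.range m, term k := by
    refine Finset.sum_congr rfl fun k hk => ?_
    have : (k : ℝ) ≤ m := by exact_mod_cast (Finset.mem_range.mp hk).le
    rw [abs_of_nonneg (by push_cast; linarith)]
  have upper : ∑ k ∈ Finset.Ico m (2 * m + 1),
      ((2 * m).choose k : ℝ) * |((2 * m : ℕ) : ℝ) - 2 * k| =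
        -∑ k ∈ Finset.Ico m (2 * m + 1), term k := by
    rw [← Finset.sum_neg_distrib]
    refine Finset.sum_congr rfl fun k hk => ?_
    have : (m : ℝ) ≤ k := by exact_mod_cast (Finset.mem_Ico.mp hk).1
    rw [abs_of_nonpos (by push_cast; linarith), mul_neg]
  have lower_add_upper : ∑ k ∈ Finset.range m, term k +
      ∑ k ∈ Finset.Ico m (2 * m + 1), term k = 0 := by
    rw [Finset.sum_range_add_sum_Ico _ (by omega), sum_range_choose_mul_sub_two_mul]
    simp
  have lower_eq : ∑ k ∈ Finset.range m, term k = m * (2 * m).choose m :=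
    sum_range_choose_mul_sub_two_mul (2 * m) m
  rw [← Finset.sum_range_add_sum_Ico _ (by omega : m ≤ 2 * m + 1), lower, upper,
    eq_neg_of_add_eq_zero_right lower_add_upper, neg_neg, lower_eq]
  push_cast
  ring

theorem expect_abs_sum_signVec (hι : Even (Fintype.card ι)) :
    𝔼 ε : ι → ℤˣ, |∑ i, signVec ε i| = mu (Fintype.card ι) - 1 := by
  obtain ⟨m, hm⟩ := hι.two_dvd
  rw [Fintype.expect_eq_sum_div_card, sum_apply_sum_signVec (fun x => |x|), hm]
  simp only [nsmul_eq_mul, sum_range_choose_mul_abs_sub_two_mul]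
  simp only [mu, _root_.zpow_neg, zpow_natCast, Fintype.card_pi, Fintype.card_units_int,
    Finset.prod_const, Finset.card_univ, hm, Nat.cast_pow, Nat.cast_ofNat,
    Nat.mul_div_cancel_left m two_pos]
  ring

theorem expect_abs_dotProduct_signVec (hι : Even (Fintype.card ι)) {w : ι → ℝ}
    (hw : ∀ i, w i = 1 ∨ w i = -1) :
    𝔼 ε : ι → ℤˣ, |w ⬝ᵥ signVec ε| = mu (Fintype.card ι) - 1 := by
  obtain ⟨δ, rfl⟩ := exists_eq_signVec hw
  rw [← expect_abs_sum_signVec hι]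
  refine Fintype.expect_equiv (Equiv.mulLeft δ) _ _ fun ε => ?_
  simp only [dotProduct, Equiv.coe_mulLeft, signVec_mul, Pi.mul_apply]

end SignVectors

theorem one_le_mu (h : ℕ) : 1 ≤ mu h :=
  le_add_of_nonneg_right (by positivity)

theorem mu_pos (h : ℕ) : 0 < mu h := one_pos.trans_le (one_le_mu h)

theorem sgn_mul_sgn_self (x : ℝ) : sgn x * sgn x = 1 := by
  unfold sgn
  split_ifs <;> norm_num

theorem sgn_mul_eq_abs (x : ℝ) : sgn x * x = |x| := by
  unfold sgn
  split_ifs with hx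
  · rw [one_mul, abs_of_nonneg hx]
  · rw [neg_one_mul, abs_of_neg (not_le.mp hx)]

theorem sgn_mul_le_abs (x y : ℝ) : sgn x * y ≤ |y| := by
  unfold sgn
  split_ifs
  · simpa only [one_mul] using le_abs_self y
  · simpa only [neg_one_mul] using neg_le_abs y

section SignDual

variable {ι : Type*} [Fintype ι] [DecidableEq ι] {A : Matrix ι ι ℝ}

/-- The row of `C * A⁻¹` that belongs to the column `x` of `B`. For `A` with orthogonal columns of
equal length it is a subgradient at `x` of the norm `x ↦ signDual A x ⬝ᵥ x`. -/
noncomputable def signDual (A : Matrix ι ι ℝ) (x : ι → ℝ) : ι → ℝ :=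
  (fun k => sgn ((x ᵥ* A) k)) ᵥ* A⁻¹

variable [Nonempty ι] (hA : Aᵀ * A = (Fintype.card ι : ℝ) • 1)
include hA

theorem smul_transpose_mul_eq_one : (Fintype.card ι : ℝ)⁻¹ • Aᵀ * A = 1 := by
  rw [smul_mul_assoc, hA, inv_smul_smul₀ (Nat.cast_ne_zero.mpr Fintype.card_ne_zero)]

theorem signDual_dotProduct (x y : ι → ℝ) :
    signDual A x ⬝ᵥ y = 𝔼 k, sgn ((x ᵥ* A) k) * (y ᵥ* A) k := by
  rw [signDual, inv_eq_left_inv (smul_transpose_mul_eq_one hA), vecMul_smul,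
    smul_dotProduct, ← dotProduct_mulVec, mulVec_transpose, Fintype.expect_eq_sum_div_card,
    smul_eq_mul, inv_mul_eq_div, dotProduct]

theorem signDual_dotProduct_self (x : ι → ℝ) :
    signDual A x ⬝ᵥ x = 𝔼 k, |(x ᵥ* A) k| := by
  simp only [signDual_dotProduct hA, sgn_mul_eq_abs]

theorem signDual_dotProduct_le (x y : ι → ℝ) :
    signDual A x ⬝ᵥ y ≤ signDual A y ⬝ᵥ y := by
  rw [signDual_dotProduct hA, signDual_dotProduct_self hA]
  exact Finset.expect_le_expect fun k _ => sgn_mul_le_abs _ _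

theorem signDual_dotProduct_signDual (x : ι → ℝ) : signDual A x ⬝ᵥ signDual A x = 1 := by
  have : signDual A x ᵥ* A = fun k => sgn ((x ᵥ* A) k) := by
    have left_inv := smul_transpose_mul_eq_one hA
    rw [signDual, vecMul_vecMul, inv_eq_left_inv left_inv, left_inv, vecMul_one]
  simp only [signDual_dotProduct hA, this, sgn_mul_sgn_self, Fintype.expect_const]

theorem expect_sq_signDual_dotProduct_signVec (x : ι → ℝ) :
    𝔼 ε, (signDual A x ⬝ᵥ signVec ε) ^ 2 = 1 := by
  rw [expect_sq_dotProduct_signVec, signDual_dotProduct_signDual hA]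

theorem expect_signDual_dotProduct_self (hι : Even (Fintype.card ι))
    (hA_entry : ∀ i j, A i j = 1 ∨ A i j = -1) :
    𝔼 ε, signDual A (signVec ε) ⬝ᵥ signVec ε = mu (Fintype.card ι) - 1 := by
  simp only [signDual_dotProduct_self hA]
  rw [Finset.expect_comm]
  have column_mean (k : ι) : 𝔼 ε, |(signVec ε ᵥ* A) k| = mu (Fintype.card ι) - 1 := by
    simpa only [vecMul, dotProduct_comm] using
      expect_abs_dotProduct_signVec hι fun i => hA_entry i k
  simp only [column_mean, Fintype.expect_const]

theorem sq_signDual_dotProduct_self_sub_le (ε : ι → ℤˣ) (i : ι) (e : ℤˣ) :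
    (signDual A (signVec ε) ⬝ᵥ signVec ε - signDual A (signVec (Function.update ε i e)) ⬝ᵥ
        signVec (Function.update ε i e)) ^ 2 ≤
      (signDual A (signVec ε) i ^ 2 + signDual A (signVec (Function.update ε i e)) i ^ 2) *
        (((ε i : ℤ) : ℝ) - ((e : ℤ) : ℝ)) ^ 2 := by
  set x := signVec ε
  set y := signVec (Function.update ε i e)
  have sub_eq (u : ι → ℝ) : u ⬝ᵥ x - u ⬝ᵥ y = u i * (((ε i : ℤ) : ℝ) - ((e : ℤ) : ℝ)) := by
    rw [← dotProduct_sub, signVec_sub_signVec_update, dotProduct_single]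
  have upper := sub_eq (signDual A x)
  have lower := sub_eq (signDual A y)
  have hxy := signDual_dotProduct_le hA x y
  have hyx := signDual_dotProduct_le hA y x
  rw [add_mul, ← mul_pow, ← mul_pow, ← upper, ← lower]
  rcases le_total (signDual A y ⬝ᵥ y) (signDual A x ⬝ᵥ x) with h | h
  · nlinarith [sq_nonneg (signDual A y ⬝ᵥ x - signDual A y ⬝ᵥ y)]
  · nlinarith [sq_nonneg (signDual A x ⬝ᵥ x - signDual A x ⬝ᵥ y)]

theorem resampleEnergy_signDual_dotProduct_self_le (i : ι) :
    resampleEnergy i (fun ε : ι → ℤˣ => signDual A (signVec ε) ⬝ᵥ signVec ε) ≤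
      4 * 𝔼 ε, signDual A (signVec ε) i ^ 2 := by
  let weight (ε : ι → ℤˣ) (e : ℤˣ) : ℝ :=
    signDual A (signVec ε) i ^ 2 * (((ε i : ℤ) : ℝ) - ((e : ℤ) : ℝ)) ^ 2
  have expect_weight : 𝔼 ε, 𝔼 e, weight ε e = 2 * 𝔼 ε, signDual A (signVec ε) i ^ 2 := by
    have expect_sub_sq (e : ℤˣ) : 𝔼 e' : ℤˣ, (((e : ℤ) : ℝ) - ((e' : ℤ) : ℝ)) ^ 2 = 2 := by
      rw [expect_intUnits]
      rcases Int.units_eq_one_or e with rfl | rfl <;> norm_num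
    simp only [weight, ← Finset.mul_expect, expect_sub_sq, ← Finset.expect_mul, mul_comm]
  calc resampleEnergy i (fun ε : ι → ℤˣ => signDual A (signVec ε) ⬝ᵥ signVec ε)
      ≤ 𝔼 ε, 𝔼 e, (weight ε e + weight (Function.update ε i e) (ε i)) := by
        refine Finset.expect_le_expect fun ε _ => Finset.expect_le_expect fun e _ =>
          (sq_signDual_dotProduct_self_sub_le hA ε i e).trans_eq ?_
        simp only [weight, Function.update_self]
        ring
    _ = 4 * 𝔼 ε, signDual A (signVec ε) i ^ 2 := by
        simp only [Finset.expect_add_distrib, expect_update_comm weight i, expect_weight]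
        ring

theorem expect_sq_signDual_dotProduct_self_sub_le (hι : Even (Fintype.card ι))
    (hA_entry : ∀ i j, A i j = 1 ∨ A i j = -1) :
    𝔼 ε, (signDual A (signVec ε) ⬝ᵥ signVec ε - (mu (Fintype.card ι) - 1)) ^ 2 ≤ 2 := by
  have sum_sq : ∑ i, 4 * 𝔼 ε : ι → ℤˣ, signDual A (signVec ε) i ^ 2 = 4 := by
    have norm_sq (ε : ι → ℤˣ) : ∑ i, signDual A (signVec ε) i ^ 2 = 1 := by
      simpa only [dotProduct, ← sq] using signDual_dotProduct_signDual hA (signVec ε)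
    simp only [← Finset.mul_sum, ← Finset.expect_sum_comm, norm_sq, Fintype.expect_const, mul_one]
  have energy_le := Finset.sum_le_sum fun i (_ : i ∈ Finset.univ) =>
    resampleEnergy_signDual_dotProduct_self_le hA i
  have variance_le := efron_stein fun ε : ι → ℤˣ => signDual A (signVec ε) ⬝ᵥ signVec ε
  rw [expect_signDual_dotProduct_self hA hι hA_entry] at variance_le
  linarith

end SignDual

-- The constant `c = 8 / 15` of the next two lemmas is one with `3 ≤ 4 * c ^ 2 * exp 1` and
-- `c * exp c ≤ 1`.
theorem sq_mul_add_one_le {d : ℝ} (hd : 2 ≤ d) :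
    d ^ 2 * (d + 1) ≤ (8 / 15 * (2 * d * √((d - 1) * Real.exp 1))) ^ 2 := by
  have sq_eq : (8 / 15 * (2 * d * √((d - 1) * Real.exp 1))) ^ 2 =
      d ^ 2 * (256 / 225 * ((d - 1) * Real.exp 1)) := by
    rw [mul_pow, mul_pow, Real.sq_sqrt (mul_nonneg (by linarith) (Real.exp_pos 1).le)]
    ring
  rw [sq_eq]
  gcongr
  nlinarith [Real.exp_one_gt_d9]

theorem mul_exp_mul_le_self {z : ℝ} (hz : 0 ≤ z) (hz_le : z ≤ 1) :
    8 / 15 * z * Real.exp (8 / 15 * z) ≤ z := by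
  have exp_le : Real.exp (8 / 15 * z) ≤ 15 / 8 := by
    have := (abs_le.mp (Real.abs_exp_sub_one_sub_id_le (x := 8 / 15 * z)
      (by rw [abs_of_nonneg] <;> linarith))).2
    nlinarith
  calc 8 / 15 * z * Real.exp (8 / 15 * z) ≤ 8 / 15 * z * (15 / 8) := by gcongr
    _ = z := by ring

section DualGram

variable {ι κ : Type*} [Fintype ι] [DecidableEq ι] {A : Matrix ι ι ℝ}

/-- The matrix whose columns are the sign vectors `signVec (ε j)`. -/
def signMatrix (ε : κ → ι → ℤˣ) : Matrix ι κ ℝ := Matrix.of fun i j => signVec (ε j) i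

/-- The matrix `F = C * A⁻¹ * B` of the sign matrix `B = signMatrix ε`, as pairings of the columns
of `B` with their sign duals. -/
noncomputable def dualGram (A : Matrix ι ι ℝ) (ε : κ → ι → ℤˣ) : Matrix κ κ ℝ :=
  Matrix.of fun i j => signDual A (signVec (ε i)) ⬝ᵥ signVec (ε j)

theorem Fmat_signMatrix {h d : ℕ} (A : Matrix (Fin h) (Fin h) ℝ) (ε : Fin d → Fin h → ℤˣ) :
    Fmat A (signMatrix ε) = dualGram A ε := by
  ext i j
  have row_eq : (fun k => Cmat A (signMatrix ε) i k) = fun k => sgn ((signVec (ε i) ᵥ* A) k) := by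
    ext k
    rw [← mulVec_transpose]
    rfl
  change ((fun k => Cmat A (signMatrix ε) i k) ᵥ* A⁻¹) ⬝ᵥ signVec (ε j) = _
  rw [row_eq]
  rfl

variable [Nonempty ι] [Fintype κ] [DecidableEq κ]
  (hA : Aᵀ * A = (Fintype.card ι : ℝ) • 1) (hι : Even (Fintype.card ι))
  (hA_entry : ∀ i j, A i j = 1 ∨ A i j = -1)
include hA hι hA_entry

theorem expect_sq_dualGram_sub_apply_le (i j : κ) :
    𝔼 ε, (dualGram A ε - (mu (Fintype.card ι) - 1) • 1) i j ^ 2 ≤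
      1 + (1 : Matrix κ κ ℝ) i j := by
  rcases eq_or_ne i j with rfl | hij
  · have diagonal := expect_eval (fun ε => (signDual A (signVec ε) ⬝ᵥ signVec ε -
      (mu (Fintype.card ι) - 1)) ^ 2) i
    have := diagonal.trans_le (expect_sq_signDual_dotProduct_self_sub_le hA hι hA_entry)
    simpa [dualGram, one_add_one_eq_two] using this
  · have off_diagonal := expect_eval_pair (fun ε ε' => (signDual A (signVec ε) ⬝ᵥ signVec ε') ^ 2)
      hij
    simp only [expect_sq_signDual_dotProduct_signVec hA, Fintype.expect_const] at off_diagonal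
    simpa [dualGram, hij] using off_diagonal.le

theorem exists_sum_sq_dualGram_sub_le :
    ∃ ε : κ → ι → ℤˣ, ∑ i, ∑ j, (dualGram A ε - (mu (Fintype.card ι) - 1) • 1) i j ^ 2 ≤
      (Fintype.card κ : ℝ) * (Fintype.card κ + 1) := by
  have expect_le : 𝔼 ε : κ → ι → ℤˣ, ∑ i, ∑ j,
      (dualGram A ε - (mu (Fintype.card ι) - 1) • 1) i j ^ 2 ≤
        (Fintype.card κ : ℝ) * (Fintype.card κ + 1) := by
    calc _ = ∑ i, ∑ j, 𝔼 ε : κ → ι → ℤˣ,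
          (dualGram A ε - (mu (Fintype.card ι) - 1) • 1) i j ^ 2 := by
          simp only [Finset.expect_sum_comm]
      _ ≤ ∑ i, ∑ j, (1 + (1 : Matrix κ κ ℝ) i j) :=
          Finset.sum_le_sum fun i _ => Finset.sum_le_sum fun j _ =>
            expect_sq_dualGram_sub_apply_le hA hι hA_entry i j
      _ = (Fintype.card κ : ℝ) * (Fintype.card κ + 1) := by
          simp [Finset.sum_add_distrib, Matrix.one_apply, mul_add]
  obtain ⟨ε, -, hε⟩ := Finset.exists_le_of_expect_le Finset.univ_nonempty expect_le
  exact ⟨ε, hε⟩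

theorem exists_mu_pow_mul_le_det_dualGram_add_one {R : ℝ} (hR : 0 ≤ R)
    (hκ : (Fintype.card κ : ℝ) ^ 2 * (Fintype.card κ + 1) ≤ (mu (Fintype.card ι) * R) ^ 2) :
    ∃ ε : κ → ι → ℤˣ, mu (Fintype.card ι) ^ Fintype.card κ * (1 - R * Real.exp R) ≤
      (dualGram A ε + 1).det := by
  obtain ⟨ε, hε⟩ := exists_sum_sq_dualGram_sub_le (κ := κ) hA hι hA_entry
  refine ⟨ε, ?_⟩
  have eq_smul_add : dualGram A ε + 1 =
      mu (Fintype.card ι) • 1 + (dualGram A ε - (mu (Fintype.card ι) - 1) • 1) := by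
    module
  rw [eq_smul_add]
  refine pow_mul_one_sub_mul_exp_le_det_smul_one_add (mu_pos _) hR _ (le_trans ?_ hκ)
  rw [sq, mul_assoc]
  gcongr

theorem exists_one_add_card_mul_le_det_dualGram_add_one :
    ∃ ε : κ → ι → ℤˣ, 1 + Fintype.card κ * (mu (Fintype.card ι) - 1) ≤
      (dualGram A ε + 1).det := by
  obtain ⟨δ, -, hδ⟩ := Finset.exists_le_of_le_expect Finset.univ_nonempty
    (expect_signDual_dotProduct_self hA hι hA_entry).ge
  refine ⟨fun _ => δ, ?_⟩
  set t := signDual A (signVec δ) ⬝ᵥ signVec δ with ht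
  have rank_one : dualGram A (fun _ : κ => δ) + 1 =
      1 + replicateCol Unit (fun _ => t) * replicateRow Unit (fun _ => (1 : ℝ)) := by
    ext i j
    simp [dualGram, Matrix.mul_apply, add_comm, ht]
  rw [rank_one, det_one_add_replicateCol_mul_replicateRow]
  simpa [dotProduct] using mul_le_mul_of_nonneg_left hδ (Nat.cast_nonneg (Fintype.card κ))

theorem exists_mu_pow_mul_one_sub_le_det_dualGram_add_one (hκ : 2 ≤ Fintype.card κ) {z : ℝ}
    (hz : z = 2 * Fintype.card κ * √((Fintype.card κ - 1) * Real.exp 1) / mu (Fintype.card ι))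
    (hz_le : z ≤ 1) :
    ∃ ε : κ → ι → ℤˣ, mu (Fintype.card ι) ^ Fintype.card κ * (1 - z) ≤
      (dualGram A ε + 1).det := by
  have mu_pos := mu_pos (Fintype.card ι)
  have z_nonneg : 0 ≤ z := by rw [hz]; positivity
  have radius_sq : (Fintype.card κ : ℝ) ^ 2 * (Fintype.card κ + 1) ≤
      (mu (Fintype.card ι) * (8 / 15 * z)) ^ 2 := by
    rw [hz, mul_left_comm, mul_div_cancel₀ _ mu_pos.ne']
    exact sq_mul_add_one_le (by exact_mod_cast hκ)
  obtain ⟨ε, hε⟩ := exists_mu_pow_mul_le_det_dualGram_add_one hA hι hA_entry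
    (by positivity : 0 ≤ 8 / 15 * z) radius_sq
  refine ⟨ε, le_trans ?_ hε⟩
  gcongr
  exact mul_exp_mul_le_self z_nonneg hz_le

end DualGram

/-- Let `d ≥ 1`, let `h ≥ 4` be a Hadamard order with Hadamard matrix `A`
(so `4 ∣ h`), and for `B ∈ {−1,1}^{h×d}` set `C = sgn(AᵀB)ᵀ`,
`F = C A⁻¹ B`, `G = F + I`.  Then there exists a choice of `B` such that
`det G ≥ μ(h)^d (1 − 2d√((d−1)e)/μ(h))`. -/
theorem exists_B_det_G_lower_bound_Lovasz (h d : ℕ)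
    (h4 : 4 ∣ h) (hh : 4 ≤ h) (hd : 1 ≤ d)
    (A : Matrix (Fin h) (Fin h) ℝ)
    (hA1 : ∀ i j, A i j = 1 ∨ A i j = -1)
    (hA2 : Aᵀ * A = (h : ℝ) • 1) :
    ∃ B : Matrix (Fin h) (Fin d) ℝ,
      (∀ i j, B i j = 1 ∨ B i j = -1) ∧
      (Fmat A B + 1).det ≥
        mu h ^ d *
          (1 - 2 * (d : ℝ) * Real.sqrt (((d : ℝ) - 1) * Real.exp 1) / mu h) := by
  set z := 2 * (d : ℝ) * √(((d : ℝ) - 1) * Real.exp 1) / mu h with hz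
  have : Nonempty (Fin h) := ⟨⟨0, by omega⟩⟩
  have hA : Aᵀ * A = (Fintype.card (Fin h) : ℝ) • 1 := by simpa only [Fintype.card_fin] using hA2
  have h_even : Even (Fintype.card (Fin h)) := by
    simpa only [Fintype.card_fin] using even_iff_two_dvd.mpr (dvd_trans (by norm_num) h4)
  suffices ∃ ε : Fin d → Fin h → ℤˣ, mu h ^ d * (1 - z) ≤ (dualGram A ε + 1).det by
    obtain ⟨ε, hε⟩ := this
    exact ⟨signMatrix ε, fun i j => signVec_eq_one_or (ε j) i, by rwa [Fmat_signMatrix]⟩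
  by_cases degenerate : d = 1 ∨ 1 < z
  · obtain ⟨ε, hε⟩ := exists_one_add_card_mul_le_det_dualGram_add_one (κ := Fin d) hA h_even hA1
    refine ⟨ε, le_trans ?_ hε⟩
    simp only [Fintype.card_fin]
    rcases degenerate with rfl | hz_gt
    · simp [hz]
    · nlinarith [pow_pos (mu_pos h) d, one_le_mu h, Nat.cast_nonneg (α := ℝ) d]
  · obtain ⟨hd_ne, hz_le⟩ := not_or.mp degenerate
    simpa only [Fintype.card_fin] using
      exists_mu_pow_mul_one_sub_le_det_dualGram_add_one (κ := Fin d) hA h_even hA1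
        (by rw [Fintype.card_fin]; omega) (by simp only [Fintype.card_fin, hz]) (not_lt.mp hz_le)
end
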